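/- arXiv:2411.03516 — 2 statements merged into one kernel-verified Lean document; each statement's English description precedes it below -/
import Mathlib

section
/- For every β>1, the bifurcation set satisfies E_β = {t ∈ [0,1) : T_β^n(t) ≥ t for all n ≥ 0}. -/
open Set Filter MeasureTheory Topology

noncomputable section

/-- The β-transformation `x ↦ βx - ⌊βx⌋`. -/
def Tbeta (β x : ℝ) : ℝ := Int.fract (β * x)

/-- The survivor set `K_β(t)`: points of `[0,1)` whose orbit never enters `[0,t)`. -/
def survivor (β t : ℝ) : Set ℝ :=
  {x | x ∈ Set.Ico (0 : ℝ) 1 ∧ ∀ n : ℕ, t ≤ (Tbeta β)^[n] x}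

/-- The set-valued bifurcation set `E_β`. -/
def Ebif (β : ℝ) : Set ℝ :=
  {t | t ∈ Set.Ico (0 : ℝ) 1 ∧ ∀ t' : ℝ, t < t' → survivor β t' ≠ survivor β t}

/-- `(c)_β = Σ_{i≥1} c_i β^{-i}` for an infinite digit sequence (indexed from `0`). -/
def valSeq (β : ℝ) (c : ℕ → ℕ) : ℝ := ∑' i : ℕ, (c i : ℝ) / β ^ (i + 1)

/-- `(w 0^∞)_β` for a finite word `w`. -/
def valWord (β : ℝ) (w : List ℕ) : ℝ :=
  ∑ i ∈ Finset.range w.length, (w.getD i 0 : ℝ) / β ^ (i + 1)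

/-- `w⁺`: increment the last letter of `w`. -/
def wplus (w : List ℕ) : List ℕ := w.dropLast ++ [w.getLast! + 1]

/-- `w⁻`: decrement the last letter of `w`. -/
def wminus (w : List ℕ) : List ℕ := w.dropLast ++ [w.getLast! - 1]

/-- `θ`: increment every digit of `w` by one. -/
def theta (w : List ℕ) : List ℕ := w.map (· + 1)

/-- `L(w)`: the lexicographically largest cyclic permutation of `w`. -/
def maxCyc (w : List ℕ) : List ℕ := ((List.range w.length).map w.rotate).foldl max []

/-- `w^∞`: the periodic sequence with period block `w`. -/
def perSeq (w : List ℕ) : ℕ → ℕ := fun i => w.getD (i % w.length) 0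

/-- The sequence given by the word `w` followed by the sequence `c`. -/
def wordSeq (w : List ℕ) (c : ℕ → ℕ) : ℕ → ℕ :=
  fun i => if i < w.length then w.getD i 0 else c (i - w.length)

/-- Strict lexicographic order `≺` on sequences. -/
def seqLt (x y : ℕ → ℕ) : Prop := ∃ n, (∀ i < n, x i = y i) ∧ x n < y n

/-- Lexicographic order `≼` on sequences. -/
def seqLe (x y : ℕ → ℕ) : Prop := x = y ∨ seqLt x y

/-- The `n`-fold left shift `σⁿ` on sequences. -/
def shiftn (n : ℕ) (x : ℕ → ℕ) : ℕ → ℕ := fun i => x (i + n)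

/-- One step of the Farey recursion: insert the concatenation `w_i w_{i+1}`
between consecutive entries. -/
def fareyInsert : List (List ℕ) → List (List ℕ)
  | [] => []
  | [w] => [w]
  | w :: v :: rest => w :: (w ++ v) :: fareyInsert (v :: rest)

/-- The ordered set `F_n` of Farey words of level `n`. -/
def fareyLevel : ℕ → List (List ℕ)
  | 0 => [[0], [1]]
  | n + 1 => fareyInsert (fareyLevel n)

/-- `F`: all Farey words of length at least two. -/
def FareySet : Set (List ℕ) := {w | (∃ n, w ∈ fareyLevel n) ∧ w ≠ [0] ∧ w ≠ [1]}

/-- `F̂ = F ∪ {1}`. -/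
def FareyHat : Set (List ℕ) := FareySet ∪ {[1]}

/-- The extended Farey set `F_e = {θ^k(w) : w ∈ F̂, k ≥ 0}`. -/
def FareyExt : Set (List ℕ) := {w | ∃ v ∈ FareyHat, ∃ k : ℕ, w = theta^[k] v}

/-- A nonempty word is Lyndon iff it is strictly smaller than each of its nontrivial
cyclic rotations (equivalently: aperiodic and lexicographically smallest among its
cyclic permutations). -/
def IsLyndon (w : List ℕ) : Prop := w ≠ [] ∧ ∀ i, 0 < i → i < w.length → w < w.rotate i

/-- `L_e`: all Lyndon words over `ℕ ∪ {0}` except the single-letter word `0`. -/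
def LyndonExt : Set (List ℕ) := {w | IsLyndon w ∧ w ≠ [0]}

/-- `L`: Lyndon words over `{0,1}` of length at least `2`. -/
def LyndonBin : Set (List ℕ) := {w | IsLyndon w ∧ 2 ≤ w.length ∧ ∀ d ∈ w, d ≤ 1}

/-- The block of `Φ_s` emitted for current digit `d` after previous digit `p`:
`L(s)` for `00`, `s⁻` for `10`, `L(s)⁺` for `01`, `s` for `11`. -/
def phiBlock (s : List ℕ) (p d : ℕ) : List ℕ :=
  if d = 0 then (if p = 0 then maxCyc s else wminus s)
  else (if p = 0 then wplus (maxCyc s) else s)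

def phiAux (s : List ℕ) : ℕ → List ℕ → List ℕ
  | _, [] => []
  | p, d :: rest => phiBlock s p d ++ phiAux s d rest

/-- The substitution `Φ_s` on finite words; `s • r = subst s r`.  An initial digit `0`
produces `s⁻`, an initial digit `1` produces `L(s)⁺`, and thereafter runs
`0^k` resp. `1^l` produce `L(s)^{k-1}` resp. `s^{l-1}`, in accordance with
`Φ_s(0^{k₁}1^{l₁}…) = s⁻ L(s)^{k₁-1} L(s)⁺ s^{l₁-1} …` and
`Φ_s(1^{k₁}0^{l₁}…) = L(s)⁺ s^{k₁-1} s⁻ L(s)^{l₁-1} …`. -/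
def subst (s r : List ℕ) : List ℕ :=
  match r with
  | [] => []
  | d :: rest => phiBlock s (1 - d) d ++ phiAux s d rest

/-- The substitution `Φ_s` on infinite sequences, as the limit of its values
on initial segments (each digit contributes a nonempty block, so the `i`-th letter
is determined by the first `i+1` digits). -/
def phiSeq (s : List ℕ) (c : ℕ → ℕ) : ℕ → ℕ :=
  fun i => (subst s (List.ofFn fun j : Fin (i + 1) => c j)).getD i 0

/-- `Λ_e(m) = {s₁ • s₂ • … • s_m : s₁ ∈ F_e, s₂,…,s_m ∈ F}`. -/
def LambdaE (m : ℕ) : Set (List ℕ) :=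
  {w | ∃ s₁ ∈ FareyExt, ∃ rs : List (List ℕ),
    rs.length = m - 1 ∧ (∀ r ∈ rs, r ∈ FareySet) ∧ w = rs.foldl subst s₁}

/-- `Λ_e = ∪_{m≥1} Λ_e(m)`. -/
def LambdaExt : Set (List ℕ) := ⋃ m ∈ Set.Ici 1, LambdaE m

/-- `β_ℓ^S`: the base `β > 1` with `(L(S)^∞)_β = 1` (it is unique since
`β ↦ (c)_β` is strictly decreasing). -/
def betaL (S : List ℕ) : ℝ :=
  Classical.epsilon fun β : ℝ => 1 < β ∧ valSeq β (perSeq (maxCyc S)) = 1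

/-- `β_*^S`: the base `β > 1` with `(L(S)⁺ S⁻ L(S)^∞)_β = 1`. -/
def betaStar (S : List ℕ) : ℝ :=
  Classical.epsilon fun β : ℝ =>
    1 < β ∧ valSeq β (wordSeq (wplus (maxCyc S) ++ wminus S) (perSeq (maxCyc S))) = 1

/-- `β_r^S`: the base `β > 1` with `(L(S)⁺ S^∞)_β = 1`. -/
def betaR (S : List ℕ) : ℝ :=
  Classical.epsilon fun β : ℝ => 1 < β ∧ valSeq β (wordSeq (wplus (maxCyc S)) (perSeq S)) = 1

/-- The Lyndon/Farey interval `J^S = [β_ℓ^S, β_r^S]`. -/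
def Jint (S : List ℕ) : Set ℝ := Set.Icc (betaL S) (betaR S)

/-- The basic interval `I^S = [β_ℓ^S, β_*^S]`. -/
def Iint (S : List ℕ) : Set ℝ := Set.Icc (betaL S) (betaStar S)

/-- The exceptional set `E = (1,∞) ∖ ∪_{s ∈ F_e} J^s`. -/
def Eexc : Set ℝ := Set.Ioi 1 \ ⋃ s ∈ FareyExt, Jint s

/-- The relative exceptional set `E^S = (J^S ∖ I^S) ∖ ∪_{r ∈ F} J^{S•r}`. -/
def EexcRel (S : List ℕ) : Set ℝ :=
  (Jint S \ Iint S) \ ⋃ r ∈ FareySet, Jint (subst S r)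

/-- The infinitely renormalizable set `E_∞ = ∩_{m≥1} ∪_{S ∈ Λ_e(m)} J^S`. -/
def Einf : Set ℝ := ⋂ m ∈ Set.Ici 1, ⋃ S ∈ LambdaE m, Jint S

/-- `E_L = E ∪ {β_ℓ^s : s ∈ F_e}`. -/
def EL : Set ℝ := Eexc ∪ {x | ∃ s ∈ FareyExt, x = betaL s}

/-- The critical value `τ(β) = min{t > 0 : dim_H K_β(t) = 0}`. -/
def tau (β : ℝ) : ℝ := sInf {t : ℝ | 0 < t ∧ dimH (survivor β t) = 0}

end

/-!
If `f` carries right neighbourhoods to right neighbourhoods, then so do its iterates, and a drop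
`f^[n] t < t` persists for all points of some `[t, t')`. An orbit staying above `t` therefore cannot
visit `[t, t')`, so the survivor sets of `t` and `t'` coincide. Conversely, if the orbit of `t`
stays above `t`, then `t` itself survives at level `t` but at no higher level.
-/

lemma tendsto_iterate_of_forall {α : Type*} {f : α → α} {l : α → Filter α}
    (hf : ∀ x, Tendsto f (l x) (l (f x))) (n : ℕ) (x : α) :
    Tendsto f^[n] (l x) (l (f^[n] x)) := by
  induction n generalizing x with
  | zero => exact tendsto_id
  | succ n ih => exact (ih (f x)).comp (hf x)

lemma tendsto_nhdsGE_of_monotone {α γ : Type*} [Preorder α] [TopologicalSpace α] [Preorder γ]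
    [TopologicalSpace γ] {g : α → γ} (hg : Monotone g) {x : α}
    (hx : ContinuousWithinAt g (Ici x) x) : Tendsto g (𝓝[≥] x) (𝓝[≥] (g x)) :=
  hx.tendsto_nhdsWithin fun _ hy => hg hy

lemma tendsto_fract_nhdsGE {R : Type*} [Ring R] [LinearOrder R] [IsOrderedAddMonoid R] [FloorRing R]
    [TopologicalSpace R] [OrderClosedTopology R] [ContinuousSub R] (x : R) :
    Tendsto Int.fract (𝓝[≥] x) (𝓝[≥] (Int.fract x)) := by
  have hsub : Tendsto (fun y => y - (⌊x⌋ : R)) (𝓝[≥] x) (𝓝[≥] (Int.fract x)) :=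
    tendsto_nhdsGE_of_monotone (fun _ _ hle => sub_le_sub_right hle _)
      (continuous_sub_right _).continuousWithinAt
  have hfloor : ∀ᶠ y in 𝓝[≥] x, ⌊y⌋ = ⌊x⌋ := tendsto_pure.1 (tendsto_floor_right_pure_floor x)
  refine hsub.congr' ?_
  filter_upwards [hfloor] with y hy
  rw [Int.fract, hy]

lemma tendsto_Tbeta_nhdsGE {β : ℝ} (hβ : 0 ≤ β) (x : ℝ) :
    Tendsto (Tbeta β) (𝓝[≥] x) (𝓝[≥] (Tbeta β x)) :=
  (tendsto_fract_nhdsGE (β * x)).comp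
    (tendsto_nhdsGE_of_monotone (monotone_mul_left_of_nonneg hβ)
      (continuous_const_mul β).continuousWithinAt)

section SurvivorSet

variable {α : Type*} [LinearOrder α] {f : α → α} {s : Set α} {t t' : α}

/-- The survivor set at level `t` of an arbitrary self-map `f`: the points of `s` whose orbit never
goes below `t`. For `f = Tbeta β` and `s = [0, 1)` it unfolds to `survivor β t`. -/
def survivorSet (f : α → α) (s : Set α) (t : α) : Set α :=
  {x | x ∈ s ∧ ∀ n : ℕ, t ≤ f^[n] x}

/-- The bifurcation set of an arbitrary self-map `f`: the levels in `s` whose survivor set differs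
from that of every higher level, in `s` or not. For `f = Tbeta β` and `s = [0, 1)` it unfolds to
`Ebif β`. -/
def bifurcationSet (f : α → α) (s : Set α) : Set α :=
  {t | t ∈ s ∧ ∀ t' : α, t < t' → survivorSet f s t' ≠ survivorSet f s t}

lemma survivorSet_antitone : Antitone (survivorSet f s) :=
  fun _ _ hle _ hx => ⟨hx.1, fun n => hle.trans (hx.2 n)⟩

lemma notMem_survivorSet_of_lt (h : t < t') : t ∉ survivorSet f s t' :=
  fun ht => (ht.2 0).not_gt h

lemma survivorSet_subset_of_forall_Ico_lt {n : ℕ} (h : ∀ y ∈ Ico t t', f^[n] y < t) :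
    survivorSet f s t ⊆ survivorSet f s t' := by
  refine fun x hx => ⟨hx.1, fun m => le_of_not_gt fun hm => ?_⟩
  have hdrop : f^[n + m] x < t := by
    rw [Function.iterate_add_apply]
    exact h _ ⟨hx.2 m, hm⟩
  exact (hx.2 (n + m)).not_gt hdrop

lemma exists_gt_survivorSet_eq [TopologicalSpace α] [OrderTopology α] [NoMaxOrder α] {n : ℕ}
    (h : ∀ᶠ y in 𝓝[≥] t, f^[n] y < t) : ∃ t' > t, survivorSet f s t' = survivorSet f s t := by
  obtain ⟨t', ht', hsub⟩ := mem_nhdsGE_iff_exists_Ico_subset.1 h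
  exact ⟨t', ht', (survivorSet_antitone (le_of_lt ht')).antisymm
    (survivorSet_subset_of_forall_Ico_lt hsub)⟩

end SurvivorSet

theorem bifurcation_set_eq_general {α : Type*} [LinearOrder α] [TopologicalSpace α]
    [OrderTopology α] [NoMaxOrder α] {f : α → α}
    (hf : ∀ x, Tendsto f (𝓝[≥] x) (𝓝[≥] (f x))) (s : Set α) :
    bifurcationSet f s = {t | t ∈ s ∧ ∀ n : ℕ, t ≤ f^[n] t} := by
  ext t
  constructor
  · refine fun ht => ⟨ht.1, fun n => le_of_not_gt fun hn => ?_⟩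
    have hdrop : ∀ᶠ y in 𝓝[≥] t, f^[n] y < t :=
      ((tendsto_iterate_of_forall hf n t).mono_right nhdsWithin_le_nhds).eventually_lt_const hn
    obtain ⟨t', ht', heq⟩ := exists_gt_survivorSet_eq hdrop
    exact ht.2 t' ht' heq
  · intro ht
    have hmem : t ∈ survivorSet f s t := ht
    exact ⟨ht.1, fun t' ht' heq => notMem_survivorSet_of_lt ht' (heq ▸ hmem)⟩

/-- For every `β > 1`, the bifurcation set satisfies
`E_β = {t ∈ [0,1) : T_β^n(t) ≥ t for all n ≥ 0}`. -/
theorem bifurcation_set_eq (β : ℝ) (hβ : 1 < β) :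
    Ebif β = {t | t ∈ Set.Ico (0 : ℝ) 1 ∧ ∀ n : ℕ, t ≤ (Tbeta β)^[n] t} :=
  bifurcation_set_eq_general (tendsto_Tbeta_nhdsGE (zero_le_one.trans hβ.le)) (Ico 0 1)
end

section
/- For Lebesgue-almost every β ∈ (1,∞), for every δ>0 the set E_β ∩ (0,δ) contains infinitely many isolated points of E_β and infinitely many accumulation points of E_β. -/
open Set Filter MeasureTheory Topology

/-!
Call `n` a deep record of factor `N` if the `n`-th point of the orbit of `1` is smaller than all
earlier ones by a factor of `N`. For fixed `N`, almost every `β` has arbitrarily large deep records: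
leaving aside the countably many `β` for which `1` has a finite expansion, one can lower `β`
slightly so that the orbit of `1` comes close to `0` at a late time while its earlier points change
by a bounded factor only. The parameters that do this fill a fixed proportion of a one-sided
neighbourhood of `β` at arbitrarily small scales, so the exceptional set is upper porous at each of
these points, hence null by Lebesgue's density theorem.

A deep record `n` of factor `3` produces a fixed point `p` of the `n`-th iterate near `1`. The
lowest point `t` of the periodic orbit of `p` is isolated in `E_β`: points just below `t` return
below themselves after one period, and points just above `t` are mapped just above `p` and expanded
away from it until they fall below `t`.

Accumulation points exist for every `β > 1`: a survivor set contains the fixed point of an inverse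
branch together with a sequence contracted to it by that branch, and multiplication by a small power
`β ^ (-N)` maps a survivor set into `E_β`.
-/

open Function Polynomial Metric

section General

/-- Upper porosity of a set at a point: `S` misses a ball of radius comparable to `r` inside the
ball of radius `r` around `x`, for arbitrarily small `r`. -/
def UpperPorousAt {X : Type*} [PseudoMetricSpace X] (S : Set X) (x : X) : Prop :=
  ∃ l > 0, ∃ᶠ r in 𝓝[>] (0 : ℝ), ∃ z, ball z (l * r) ⊆ closedBall x r ∧ Disjoint S (ball z (l * r))

variable {E : Type*} [NormedAddCommGroup E] [NormedSpace ℝ E] [FiniteDimensional ℝ E]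
  [MeasurableSpace E] [BorelSpace E] (μ : Measure E) [μ.IsAddHaarMeasure]

lemma measure_inter_closedBall_le_of_disjoint_ball {S : Set E} {x z : E} {l r : ℝ} (hl : 0 < l)
    (hr : 0 < r) (hsub : ball z (l * r) ⊆ closedBall x r) (hdisj : Disjoint S (ball z (l * r))) :
    μ (S ∩ closedBall x r) ≤
      (1 - ENNReal.ofReal (l ^ Module.finrank ℝ E)) * μ (closedBall x r) := by
  have hball : μ (ball z (l * r)) =
      ENNReal.ofReal (l ^ Module.finrank ℝ E) * μ (closedBall x r) := by
    rw [μ.addHaar_ball_of_pos z (mul_pos hl hr), μ.addHaar_closedBall x hr.le, mul_pow,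
      ENNReal.ofReal_mul (by positivity), mul_assoc]
  calc μ (S ∩ closedBall x r)
      ≤ μ (closedBall x r \ ball z (l * r)) :=
        measure_mono fun y hy => ⟨hy.2, hdisj.notMem_of_mem_left hy.1⟩
    _ = μ (closedBall x r) - μ (ball z (l * r)) :=
        measure_sdiff hsub measurableSet_ball.nullMeasurableSet measure_ball_lt_top.ne
    _ = (1 - ENNReal.ofReal (l ^ Module.finrank ℝ E)) * μ (closedBall x r) := by
        rw [hball, ENNReal.sub_mul fun _ _ => measure_closedBall_lt_top.ne, one_mul]

theorem ae_not_upperPorousAt (S : Set E) : ∀ᵐ x ∂μ, x ∈ S → ¬ UpperPorousAt S x := by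
  refine ae_imp_of_ae_restrict ?_
  filter_upwards [Besicovitch.ae_tendsto_measure_inter_div μ S] with x hdensity ⟨l, hl, hporous⟩
  have hratio : ∃ᶠ r in 𝓝[>] (0 : ℝ), μ (S ∩ closedBall x r) / μ (closedBall x r) ≤
      1 - ENNReal.ofReal (l ^ Module.finrank ℝ E) := by
    refine (hporous.and_eventually self_mem_nhdsWithin).mono ?_
    rintro r ⟨⟨z, hsub, hdisj⟩, hr⟩
    exact ENNReal.div_le_of_le_mul
      (measure_inter_closedBall_le_of_disjoint_ball μ hl hr hsub hdisj)
  have hpos : ENNReal.ofReal (l ^ Module.finrank ℝ E) ≠ 0 := by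
    simpa using pow_pos hl _
  exact (ENNReal.sub_lt_self ENNReal.one_ne_top one_ne_zero hpos).not_ge
    (le_of_tendsto_of_frequently hdensity hratio)

theorem upperPorousAt_of_forall_exists_Ioc {S : Set ℝ} {x K : ℝ} (hK : 1 ≤ K)
    (h : ∀ ε > 0, ∃ b < x, x - b < ε ∧ ∀ y ∈ Ioc b x, K * (y - b) ≤ x - b → y ∉ S) :
    UpperPorousAt S x := by
  refine ⟨1 / (2 * K), by positivity, (nhdsGT_basis 0).frequently_iff.2 fun ε hε => ?_⟩
  obtain ⟨b, hb, hsmall, hS⟩ := h ε hε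
  have hb' : 0 < x - b := sub_pos.2 hb
  have hball : ∀ y ∈ ball (b + 1 / (2 * K) * (x - b)) (1 / (2 * K) * (x - b)),
      y ∈ Ioc b x ∧ K * (y - b) ≤ x - b := fun y hy => by
    rw [Real.ball_eq_Ioo] at hy
    have hyb : 0 ≤ y - b := by linarith [hy.1]
    have hKy : K * (y - b) ≤ x - b := by
      calc K * (y - b) ≤ K * (2 * (1 / (2 * K) * (x - b))) := by
            gcongr
            linarith [hy.2]
        _ = x - b := by field_simp
    exact ⟨⟨by linarith [hy.1], by linarith [le_mul_of_one_le_left hyb hK]⟩, hKy⟩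
  refine ⟨x - b, ⟨hb', hsmall⟩, b + 1 / (2 * K) * (x - b), fun y hy => ?_,
    disjoint_left.2 fun y hyS hy => hS y (hball y hy).1 (hball y hy).2 hyS⟩
  obtain ⟨⟨hby, hyx⟩, -⟩ := hball y hy
  rw [mem_closedBall, Real.dist_eq, abs_le]
  constructor <;> linarith

lemma exists_forall_le_or_frequently_forall_lt {α : Type*} [LinearOrder α] (u : ℕ → α) :
    (∃ m, ∀ n, u m ≤ u n) ∨ ∃ᶠ n in atTop, ∀ j < n, u n < u j := by
  refine or_iff_not_imp_right.2 fun h => ?_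
  obtain ⟨N, hN⟩ := eventually_atTop.1 (not_frequently.1 h)
  obtain ⟨m, -, hm⟩ := Finset.exists_min_image (Finset.range (N + 1)) u ⟨0, by simp⟩
  refine ⟨m, fun n => ?_⟩
  induction n using Nat.strong_induction_on with
  | _ n ih =>
    rcases lt_or_ge n N with hn | hn
    · exact hm n (Finset.mem_range.2 (by omega))
    · have hrec := hN n hn
      push Not at hrec
      obtain ⟨j, hj, hle⟩ := hrec
      exact (ih j hj).trans hle

lemma exists_iterate_le_of_isPeriodicPt {α : Type*} [LinearOrder α] {f : α → α} {x : α} {n : ℕ}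
    (hn : n ≠ 0) (hx : IsPeriodicPt f n x) : ∃ i < n, ∀ k, f^[i] x ≤ f^[k] x := by
  obtain ⟨i, hi, hmin⟩ := Finset.exists_min_image (Finset.range n) (f^[·] x) (by simpa using hn)
  refine ⟨i, Finset.mem_range.1 hi, fun k => ?_⟩
  rw [← hx.iterate_mod_apply k]
  exact hmin _ (Finset.mem_range.2 (Nat.mod_lt _ (Nat.pos_of_ne_zero hn)))

lemma iterate_sub_eq_pow_mul {R : Type*} [Ring R] {f : R → R} {A : Set R} {p c : R}
    (hA : MapsTo f A A) (hf : ∀ x ∈ A, f x - p = c * (x - p)) {x : R} (hx : x ∈ A) (k : ℕ) :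
    f^[k] x - p = c ^ k * (x - p) := by
  induction k with
  | zero => simp
  | succ k ih => rw [iterate_succ_apply', hf _ (hA.iterate k hx), ih, pow_succ', mul_assoc]

lemma eq_empty_of_mapsTo_of_expanding {K : Type*} [Field K] [LinearOrder K]
    [IsStrictOrderedRing K] [Archimedean K] {f : K → K} {A : Set K} {p q c : K} (hc : 1 < c)
    (hA : MapsTo f A A) (hpq : A ⊆ Ioo p q) (hf : ∀ x ∈ A, f x - p = c * (x - p)) : A = ∅ := by
  refine eq_empty_of_forall_notMem fun x hx => ?_
  have hpx : 0 < x - p := sub_pos.2 (hpq hx).1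
  obtain ⟨k, hk⟩ := pow_unbounded_of_one_lt ((q - p) / (x - p)) hc
  rw [div_lt_iff₀ hpx, ← iterate_sub_eq_pow_mul hA hf hx k] at hk
  linarith [(hpq (hA.iterate k hx)).2]

lemma accPt_of_mapsTo_of_contracting {𝕜 : Type*} [NormedField 𝕜] {f : 𝕜 → 𝕜} {A : Set 𝕜}
    {p c u : 𝕜} (hc0 : c ≠ 0) (hc : ‖c‖ < 1) (hA : MapsTo f A A)
    (hf : ∀ x ∈ A, f x - p = c * (x - p)) (hu : u ∈ A) (hup : u ≠ p) : AccPt p (𝓟 A) := by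
  have hiter : ∀ k, f^[k] u = c ^ k * (u - p) + p := fun k =>
    sub_eq_iff_eq_add.1 (iterate_sub_eq_pow_mul hA hf hu k)
  have hlim : Tendsto (fun k => f^[k] u) atTop (𝓝[≠] p) := by
    refine tendsto_nhdsWithin_iff.2 ⟨?_, Eventually.of_forall fun k => ?_⟩
    · simpa [hiter] using
        ((tendsto_pow_atTop_nhds_zero_of_norm_lt_one hc).mul_const (u - p)).add_const p
    · rw [hiter, mem_compl_singleton_iff, Ne, add_eq_right]
      exact mul_ne_zero (pow_ne_zero k hc0) (sub_ne_zero.2 hup)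
  exact accPt_iff_frequently_nhdsNE.2 <|
    hlim.frequently (Frequently.of_forall fun k => hA.iterate k hu)

lemma exists_eq_zero_forall_Ioc_pos {f : ℝ → ℝ} {c d : ℝ} (hcd : c ≤ d)
    (hf : ContinuousOn f (Icc c d)) (hc : f c < 0) (hd : 0 < f d) :
    ∃ b ∈ Ioo c d, f b = 0 ∧ ∀ x ∈ Ioc b d, 0 < f x := by
  obtain ⟨b, ⟨hb, hfb⟩, hmax⟩ : ∃ b, IsGreatest (Icc c d ∩ f ⁻¹' Iic 0) b :=
    (isCompact_Icc.of_isClosed_subset (hf.preimage_isClosed_of_isClosed isClosed_Icc isClosed_Iic)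
      inter_subset_left).exists_isGreatest ⟨c, left_mem_Icc.2 hcd, hc.le⟩
  have hpos : ∀ x ∈ Ioc b d, 0 < f x := fun x hx => by
    by_contra h
    exact hx.1.not_ge (hmax ⟨⟨hb.1.trans hx.1.le, hx.2⟩, not_lt.1 h⟩)
  have hzero : f b = 0 := by
    obtain ⟨x, hx, hfx⟩ := intermediate_value_Icc hb.2
      (hf.mono (Icc_subset_Icc_left hb.1)) (show (0 : ℝ) ∈ Icc (f b) (f d) from ⟨hfb, hd.le⟩)
    rcases hx.1.eq_or_lt with rfl | hbx
    · exact hfx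
    · exact absurd hfx (hpos x ⟨hbx, hx.2⟩).ne'
  refine ⟨b, ⟨hb.1.lt_of_ne ?_, hb.2.lt_of_ne ?_⟩, hzero, hpos⟩ <;> rintro rfl <;> linarith

lemma infinite_setOf_of_frequently_nhdsGT {X : Type*} [TopologicalSpace X] [Preorder X] [T1Space X]
    {a : X} {p : X → Prop} (h : ∃ᶠ x in 𝓝[>] a, p x) : {x | p x}.Infinite :=
  Set.Infinite.of_accPt <| accPt_iff_frequently_nhdsNE.2 <| h.filter_mono <|
    nhdsWithin_mono a fun _ hx => ne_of_gt hx

end General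

section OrbitPoly

/-- The polynomial `X ^ j - a₀ X ^ (j - 1) - … - a_{j - 1}`. If `a` is the digit sequence of `1` in
base `β`, then its value at `β` is the `j`-th point of the orbit of `1`. -/
noncomputable def orbitPoly (a : ℕ → ℤ) : ℕ → ℤ[X]
  | 0 => 1
  | j + 1 => X * orbitPoly a j - C (a j)

variable {a : ℕ → ℤ} {x y z : ℝ} {n : ℕ}

lemma aeval_orbitPoly_zero (a : ℕ → ℤ) (x : ℝ) : aeval x (orbitPoly a 0) = 1 := by
  simp [orbitPoly]

lemma aeval_orbitPoly_succ (a : ℕ → ℤ) (j : ℕ) (x : ℝ) :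
    aeval x (orbitPoly a (j + 1)) = x * aeval x (orbitPoly a j) - a j := by
  simp [orbitPoly]

lemma coeff_orbitPoly_self (a : ℕ → ℤ) (j : ℕ) : (orbitPoly a j).coeff j = 1 := by
  induction j with
  | zero => simp [orbitPoly]
  | succ j ih => rw [orbitPoly, coeff_sub, coeff_X_mul, coeff_C_succ, ih, sub_zero]

lemma orbitPoly_ne_zero (a : ℕ → ℤ) (j : ℕ) : orbitPoly a j ≠ 0 := fun h => by
  simpa [h] using coeff_orbitPoly_self a j

lemma aeval_orbitPoly_add_le (ha : ∀ i, 0 ≤ a i) (hx : 0 ≤ x) (j k : ℕ) :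
    aeval x (orbitPoly a (j + k)) ≤ x ^ k * aeval x (orbitPoly a j) := by
  induction k with
  | zero => simp
  | succ k ih =>
    have hak : (0 : ℝ) ≤ a (j + k) := by exact_mod_cast ha _
    calc aeval x (orbitPoly a (j + k + 1))
        ≤ x * aeval x (orbitPoly a (j + k)) := by rw [aeval_orbitPoly_succ]; linarith
      _ ≤ x * (x ^ k * aeval x (orbitPoly a j)) := by gcongr
      _ = x ^ (k + 1) * aeval x (orbitPoly a j) := by ring

lemma one_le_pow_mul_aeval_orbitPoly (ha : ∀ i, 0 ≤ a i) (hx : 0 ≤ x) {j k : ℕ}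
    (hdigit : 1 ≤ a (j + k)) (hnonneg : 0 ≤ aeval x (orbitPoly a (j + k + 1))) :
    1 ≤ x ^ (k + 1) * aeval x (orbitPoly a j) := by
  have hdigit' : (1 : ℝ) ≤ a (j + k) := by exact_mod_cast hdigit
  rw [aeval_orbitPoly_succ] at hnonneg
  calc (1 : ℝ) ≤ x * aeval x (orbitPoly a (j + k)) := by linarith
    _ ≤ x * (x ^ k * aeval x (orbitPoly a j)) := by gcongr; exact aeval_orbitPoly_add_le ha hx j k
    _ = x ^ (k + 1) * aeval x (orbitPoly a j) := by ring

lemma aeval_orbitPoly_nonneg (ha : ∀ i, 0 ≤ a i) (hx : 0 < x)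
    (hn : 0 ≤ aeval x (orbitPoly a n)) {j : ℕ} (hj : j ≤ n) : 0 ≤ aeval x (orbitPoly a j) := by
  obtain ⟨k, rfl⟩ := Nat.exists_eq_add_of_le hj
  exact nonneg_of_mul_nonneg_right (hn.trans (aeval_orbitPoly_add_le ha hx.le j k)) (pow_pos hx k)

lemma aeval_orbitPoly_succ_sub (a : ℕ → ℤ) (j : ℕ) (x y : ℝ) :
    aeval y (orbitPoly a (j + 1)) - aeval x (orbitPoly a (j + 1)) =
      y * (aeval y (orbitPoly a j) - aeval x (orbitPoly a j)) +
        (y - x) * aeval x (orbitPoly a j) := by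
  simp only [aeval_orbitPoly_succ]
  ring

lemma aeval_orbitPoly_mono (ha : ∀ i, 0 ≤ a i) (hx : 0 < x) (hxy : x ≤ y)
    (hn : 0 ≤ aeval x (orbitPoly a n)) {j : ℕ} (hj : j ≤ n) :
    aeval x (orbitPoly a j) ≤ aeval y (orbitPoly a j) := by
  induction j with
  | zero => simp only [aeval_orbitPoly_zero, le_rfl]
  | succ j ih =>
    rw [← sub_nonneg, aeval_orbitPoly_succ_sub]
    exact add_nonneg (mul_nonneg (hx.le.trans hxy) (sub_nonneg.2 (ih (by omega))))
      (mul_nonneg (sub_nonneg.2 hxy) (aeval_orbitPoly_nonneg ha hx hn (by omega)))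

lemma pow_mul_aeval_orbitPoly_sub_le (ha : ∀ i, 0 ≤ a i) (hx : 0 < x) (hxy : x ≤ y)
    (hn : 0 ≤ aeval x (orbitPoly a n)) {j k : ℕ} (hjk : j + k ≤ n) :
    y ^ k * (aeval y (orbitPoly a j) - aeval x (orbitPoly a j)) ≤
      aeval y (orbitPoly a (j + k)) - aeval x (orbitPoly a (j + k)) := by
  induction k with
  | zero => simp
  | succ k ih =>
    have hy : 0 ≤ y := hx.le.trans hxy
    have hrest : 0 ≤ (y - x) * aeval x (orbitPoly a (j + k)) :=
      mul_nonneg (sub_nonneg.2 hxy) (aeval_orbitPoly_nonneg ha hx hn (by omega))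
    have hstep := mul_le_mul_of_nonneg_left (ih (by omega)) hy
    rw [← add_assoc, aeval_orbitPoly_succ_sub, pow_succ', mul_assoc]
    linarith

lemma sub_mul_aeval_orbitPoly_sub_le (ha : ∀ i, 0 ≤ a i) (hx : 0 < x) (hxy : x ≤ y) (hyz : y ≤ z)
    (hn : 0 ≤ aeval x (orbitPoly a n)) {j : ℕ} (hj : j ≤ n) :
    (z - x) * (aeval y (orbitPoly a j) - aeval x (orbitPoly a j)) ≤
      (y - x) * (aeval z (orbitPoly a j) - aeval x (orbitPoly a j)) := by
  induction j with
  | zero => simp only [aeval_orbitPoly_zero, sub_self, mul_zero, le_rfl]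
  | succ j ih =>
    have hΔ : 0 ≤ aeval z (orbitPoly a j) - aeval x (orbitPoly a j) :=
      sub_nonneg.2 (aeval_orbitPoly_mono ha hx (hxy.trans hyz) hn (by omega))
    have hΔyz : y * ((y - x) * (aeval z (orbitPoly a j) - aeval x (orbitPoly a j))) ≤
        z * ((y - x) * (aeval z (orbitPoly a j) - aeval x (orbitPoly a j))) :=
      mul_le_mul_of_nonneg_right hyz (mul_nonneg (sub_nonneg.2 hxy) hΔ)
    have hstep := mul_le_mul_of_nonneg_left (ih (by omega)) (hx.le.trans hxy)
    simp only [aeval_orbitPoly_succ_sub]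
    linarith

end OrbitPoly

section OrbitOne

/-- The orbit of `1` under the β-transformation. -/
noncomputable def orbitOne (β : ℝ) (n : ℕ) : ℝ := (Tbeta β)^[n] 1

/-- The digits of `1` in base `β`. -/
noncomputable def digitOne (β : ℝ) (n : ℕ) : ℤ := ⌊β * orbitOne β n⌋

/-- The `n`-th point of the orbit of `1` is positive and smaller than all earlier ones by a factor
of at least `c`. -/
def IsDeepRecord (c β : ℝ) (n : ℕ) : Prop :=
  0 < orbitOne β n ∧ ∀ j < n, c * orbitOne β n ≤ orbitOne β j

lemma IsDeepRecord.mono {c c' β : ℝ} {n : ℕ} (h : IsDeepRecord c' β n) (hc : c ≤ c') :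
    IsDeepRecord c β n :=
  ⟨h.1, fun j hj => (mul_le_mul_of_nonneg_right hc h.1.le).trans (h.2 j hj)⟩

variable {β : ℝ} {n : ℕ}

lemma Tbeta_mem_Ico (β x : ℝ) : Tbeta β x ∈ Ico (0 : ℝ) 1 :=
  ⟨Int.fract_nonneg _, Int.fract_lt_one _⟩

lemma orbitOne_zero (β : ℝ) : orbitOne β 0 = 1 := rfl

lemma orbitOne_succ (β : ℝ) (n : ℕ) : orbitOne β (n + 1) = Tbeta β (orbitOne β n) :=
  iterate_succ_apply' _ _ _

lemma orbitOne_succ_eq_sub (β : ℝ) (n : ℕ) :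
    orbitOne β (n + 1) = β * orbitOne β n - digitOne β n := orbitOne_succ β n

lemma orbitOne_succ_lt_one (β : ℝ) (n : ℕ) : orbitOne β (n + 1) < 1 :=
  orbitOne_succ β n ▸ (Tbeta_mem_Ico β _).2

lemma orbitOne_mem_Icc (β : ℝ) (n : ℕ) : orbitOne β n ∈ Icc (0 : ℝ) 1 := by
  cases n with
  | zero => simp [orbitOne_zero]
  | succ n => exact ⟨orbitOne_succ β n ▸ (Tbeta_mem_Ico β _).1, (orbitOne_succ_lt_one β n).le⟩

lemma orbitOne_pos (h0 : ∀ n, orbitOne β n ≠ 0) (n : ℕ) : 0 < orbitOne β n :=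
  (orbitOne_mem_Icc β n).1.lt_of_ne (h0 n).symm

lemma digitOne_nonneg (hβ : 0 ≤ β) (n : ℕ) : 0 ≤ digitOne β n :=
  Int.floor_nonneg.2 (mul_nonneg hβ (orbitOne_mem_Icc β n).1)

lemma orbitOne_succ_eq_mul_of_digitOne_lt_one (hβ : 0 ≤ β) (h : digitOne β n < 1) :
    orbitOne β (n + 1) = β * orbitOne β n := by
  have hzero : digitOne β n = 0 := by have := digitOne_nonneg hβ n; omega
  rw [orbitOne_succ_eq_sub, hzero, Int.cast_zero, sub_zero]

lemma aeval_orbitPoly_digitOne (β : ℝ) (n : ℕ) :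
    aeval β (orbitPoly (digitOne β) n) = orbitOne β n := by
  induction n with
  | zero => rw [aeval_orbitPoly_zero, orbitOne_zero]
  | succ n ih => rw [aeval_orbitPoly_succ, ih, orbitOne_succ_eq_sub]

theorem countable_setOf_orbitOne_eq_zero : {β : ℝ | ∃ n, orbitOne β n = 0}.Countable := by
  refine (Algebraic.countable ℤ ℝ).mono ?_
  rintro β ⟨n, hn⟩
  exact ⟨_, orbitPoly_ne_zero (digitOne β) n, (aeval_orbitPoly_digitOne β n).trans hn⟩

lemma frequently_one_le_digitOne (hβ : 1 < β) (h0 : ∀ n, orbitOne β n ≠ 0) :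
    ∃ᶠ n in atTop, 1 ≤ digitOne β n := by
  by_contra h
  obtain ⟨N, hN⟩ := eventually_atTop.1 (not_frequently.1 h)
  have hgrow : ∀ k, orbitOne β (N + k) = β ^ k * orbitOne β N := by
    intro k
    induction k with
    | zero => simp
    | succ k ih =>
      rw [← add_assoc, orbitOne_succ_eq_mul_of_digitOne_lt_one (by linarith)
        (not_le.1 (hN _ (Nat.le_add_right N k))), ih]
      ring
  obtain ⟨k, hk⟩ := pow_unbounded_of_one_lt (1 / orbitOne β N) hβ
  rw [div_lt_iff₀ (orbitOne_pos h0 N), ← hgrow] at hk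
  exact hk.not_ge (orbitOne_mem_Icc β _).2

theorem frequently_one_le_digitOne_and_orbitOne_succ_le (hβ : 1 < β)
    (h0 : ∀ n, orbitOne β n ≠ 0) :
    ∃ C ≥ 1, ∃ᶠ n in atTop,
      1 ≤ digitOne β n ∧ ∀ j ≤ n, orbitOne β (n + 1) ≤ C * orbitOne β j := by
  rcases exists_forall_le_or_frequently_forall_lt (orbitOne β) with ⟨m, hm⟩ | hrec
  · have hm0 : 0 < orbitOne β m := orbitOne_pos h0 m
    refine ⟨1 / orbitOne β m, one_le_one_div hm0 (orbitOne_mem_Icc β m).2,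
      (frequently_one_le_digitOne hβ h0).mono fun n hn => ⟨hn, fun j _ => ?_⟩⟩
    rw [div_mul_eq_mul_div, one_mul]
    exact (orbitOne_mem_Icc β _).2.trans ((one_le_div hm0).2 (hm j))
  · refine ⟨1, le_rfl, ?_⟩
    rw [← map_add_atTop_eq_nat 1, frequently_map] at hrec
    refine hrec.mono fun n hn => ⟨?_, fun j hj => ?_⟩
    · -- A digit `0` makes the orbit grow, so a strict record comes right after a positive digit.
      by_contra! hdigit
      have hlt := hn n n.lt_succ_self
      rw [orbitOne_succ_eq_mul_of_digitOne_lt_one (by linarith) hdigit] at hlt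
      exact hlt.not_ge (le_mul_of_one_le_left (orbitOne_mem_Icc β n).1 hβ.le)
    · rw [one_mul]
      exact (hn j (by omega)).le

end OrbitOne

section DeepRecords

variable {β y : ℝ} {n : ℕ}

lemma orbitOne_eq_aeval_orbitPoly_digitOne (hy : 0 < y) (hyβ : y ≤ β)
    (hn : 0 ≤ aeval y (orbitPoly (digitOne β) n)) {j : ℕ} (hj : j ≤ n) :
    orbitOne y j = aeval y (orbitPoly (digitOne β) j) := by
  have ha := digitOne_nonneg (hy.le.trans hyβ)
  induction j with
  | zero => rw [orbitOne_zero, aeval_orbitPoly_zero]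
  | succ j ih =>
    have hlt : aeval y (orbitPoly (digitOne β) (j + 1)) < 1 :=
      (aeval_orbitPoly_mono ha hy hyβ hn hj).trans_lt <|
        (aeval_orbitPoly_digitOne β _).trans_lt (orbitOne_succ_lt_one β j)
    rw [orbitOne_succ, ih (by omega), Tbeta, Int.fract_eq_iff]
    refine ⟨aeval_orbitPoly_nonneg ha hy hn hj, hlt, digitOne β j, ?_⟩
    rw [aeval_orbitPoly_succ]
    ring

lemma orbitOne_le_two_mul_aeval_orbitPoly (hy : 0 < y) (hyβ : y ≤ β) (hdigit : 1 ≤ digitOne β n)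
    (hn : 0 ≤ aeval y (orbitPoly (digitOne β) (n + 1))) {j : ℕ} (hj : j ≤ n) :
    orbitOne β j ≤ 2 * aeval y (orbitPoly (digitOne β) j) := by
  obtain ⟨k, rfl⟩ := Nat.exists_eq_add_of_le hj
  have hβ : 0 < β := hy.trans_le hyβ
  have ha := digitOne_nonneg hβ.le
  have hPj : 0 ≤ aeval y (orbitPoly (digitOne β) j) :=
    aeval_orbitPoly_nonneg ha hy hn (by omega)
  have hsub : β ^ (k + 1) * (orbitOne β j - aeval y (orbitPoly (digitOne β) j)) ≤ 1 := by
    have h := pow_mul_aeval_orbitPoly_sub_le ha hy hyβ hn (j := j) (k := k + 1) le_rfl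
    rw [aeval_orbitPoly_digitOne, aeval_orbitPoly_digitOne] at h
    exact h.trans ((sub_le_self _ hn).trans (orbitOne_mem_Icc β _).2)
  have hone : 1 ≤ β ^ (k + 1) * aeval y (orbitPoly (digitOne β) j) :=
    (one_le_pow_mul_aeval_orbitPoly ha hy.le hdigit hn).trans (by gcongr)
  refine le_of_mul_le_mul_left ?_ (pow_pos hβ (k + 1))
  linarith

lemma exists_aeval_orbitPoly_digitOne_eq_zero (hβ : 0 < β) (hdigit : 1 ≤ digitOne β n)
    (hpos : 0 < orbitOne β (n + 1)) :
    ∃ b ∈ Ioo 0 β, aeval b (orbitPoly (digitOne β) (n + 1)) = 0 ∧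
      ∀ y ∈ Ioc b β, 0 < aeval y (orbitPoly (digitOne β) (n + 1)) := by
  refine exists_eq_zero_forall_Ioc_pos hβ.le (orbitPoly _ _).continuous_aeval.continuousOn ?_ ?_
  · have hdigit' : (1 : ℝ) ≤ digitOne β n := by exact_mod_cast hdigit
    rw [aeval_orbitPoly_succ]
    linarith
  · rwa [aeval_orbitPoly_digitOne]

lemma pow_mul_sub_le_one {b : ℝ} (hb : b ∈ Ioo 0 β)
    (hzero : aeval b (orbitPoly (digitOne β) (n + 1)) = 0) : β ^ n * (β - b) ≤ 1 := by
  have h := pow_mul_aeval_orbitPoly_sub_le (digitOne_nonneg (hb.1.trans hb.2).le) hb.1 hb.2.le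
    hzero.ge (add_comm 1 n).le
  simp only [add_comm 1 n, hzero, aeval_orbitPoly_digitOne, sub_zero] at h
  have hone : orbitOne β 1 - aeval b (orbitPoly (digitOne β) 1) = β - b := by
    rw [← aeval_orbitPoly_digitOne, aeval_orbitPoly_succ_sub]
    simp only [aeval_orbitPoly_zero, sub_self, mul_zero, zero_add, mul_one]
  rw [hone] at h
  exact h.trans (orbitOne_mem_Icc β _).2

/-- Just to the right of `b` the last point of the orbit is small, whereas the previous ones
remain comparable to those of the orbit in base `β`. -/
lemma exists_forall_Ioc_orbitOne_le {C : ℝ} (hβ : 0 < β) (hC : 0 ≤ C)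
    (hdigit : 1 ≤ digitOne β n) (hpos : 0 < orbitOne β (n + 1))
    (hle : ∀ j ≤ n, orbitOne β (n + 1) ≤ C * orbitOne β j) :
    ∃ b < β, β ^ n * (β - b) ≤ 1 ∧ ∀ y ∈ Ioc b β, 0 < orbitOne y (n + 1) ∧
      ∀ j ≤ n, (β - b) * orbitOne y (n + 1) ≤ (y - b) * (2 * C * orbitOne y j) := by
  obtain ⟨b, hb, hzero, hPpos⟩ := exists_aeval_orbitPoly_digitOne_eq_zero hβ hdigit hpos
  refine ⟨b, hb.2, pow_mul_sub_le_one hb hzero, fun y hy => ?_⟩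
  have hy0 : 0 < y := hb.1.trans hy.1
  have horbit : ∀ j ≤ n + 1, orbitOne y j = aeval y (orbitPoly (digitOne β) j) := fun j =>
    orbitOne_eq_aeval_orbitPoly_digitOne hy0 hy.2 (hPpos y hy).le
  refine ⟨(horbit _ le_rfl).symm ▸ hPpos y hy, fun j hj => ?_⟩
  have hsecant : (β - b) * orbitOne y (n + 1) ≤ (y - b) * orbitOne β (n + 1) := by
    have h := sub_mul_aeval_orbitPoly_sub_le (digitOne_nonneg hβ.le) hb.1 hy.1.le hy.2
      hzero.ge (le_refl (n + 1))
    rwa [hzero, sub_zero, sub_zero, aeval_orbitPoly_digitOne, ← horbit _ le_rfl] at h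
  have hhalf : orbitOne β j ≤ 2 * orbitOne y j := by
    rw [horbit j (by omega)]
    exact orbitOne_le_two_mul_aeval_orbitPoly hy0 hy.2 hdigit (hPpos y hy).le hj
  have hyb : 0 ≤ y - b := sub_nonneg.2 hy.1.le
  calc (β - b) * orbitOne y (n + 1) ≤ (y - b) * orbitOne β (n + 1) := hsecant
    _ ≤ (y - b) * (C * orbitOne β j) := by gcongr; exact hle j hj
    _ ≤ (y - b) * (C * (2 * orbitOne y j)) := by gcongr
    _ = (y - b) * (2 * C * orbitOne y j) := by ring

theorem upperPorousAt_setOf_not_exists_isDeepRecord (hβ : 1 < β) (h0 : ∀ n, orbitOne β n ≠ 0)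
    (N : ℕ) : UpperPorousAt {y | ¬ ∃ n ≥ N, IsDeepRecord N y n} β := by
  obtain ⟨C, hC, hfreq⟩ := frequently_one_le_digitOne_and_orbitOne_succ_le hβ h0
  have hNC : 0 ≤ C * N := by positivity
  refine upperPorousAt_of_forall_exists_Ioc (K := 2 * C * (N + 1)) (by linarith) fun ε hε => ?_
  obtain ⟨k, hk⟩ := pow_unbounded_of_one_lt (1 / ε) hβ
  obtain ⟨n, hn, hdigit, hle⟩ := frequently_atTop.1 hfreq (max N k)
  obtain ⟨b, hb, hpow, hrec⟩ :=
    exists_forall_Ioc_orbitOne_le (by linarith) (by linarith) hdigit (orbitOne_pos h0 _) hle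
  refine ⟨b, hb, ?_, fun y hy hKy hyS => hyS ⟨n + 1, by omega, (hrec y hy).1, fun j hj => ?_⟩⟩
  · have hε' : 1 < β ^ n * ε := (div_lt_iff₀ hε).1 <|
      hk.trans_le (pow_le_pow_right₀ hβ.le ((le_max_right N k).trans hn))
    exact lt_of_mul_lt_mul_left (hpow.trans_lt hε') (by positivity)
  · obtain ⟨hpos, hyrec⟩ := hrec y hy
    have hyb : 0 < y - b := sub_pos.2 hy.1
    refine le_of_mul_le_mul_left ?_ (show 0 < 2 * C * (y - b) by positivity)
    calc 2 * C * (y - b) * (N * orbitOne y (n + 1))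
        = 2 * C * N * (y - b) * orbitOne y (n + 1) := by ring
      _ ≤ 2 * C * (N + 1) * (y - b) * orbitOne y (n + 1) := by gcongr; linarith
      _ ≤ (β - b) * orbitOne y (n + 1) := by gcongr
      _ ≤ (y - b) * (2 * C * orbitOne y j) := hyrec j (by omega)
      _ = 2 * C * (y - b) * orbitOne y j := by ring

theorem ae_forall_exists_isDeepRecord :
    ∀ᵐ β : ℝ, 1 < β → ∀ N : ℕ, ∃ n ≥ N, IsDeepRecord N β n := by
  filter_upwards [ae_all_iff.2 fun N : ℕ =>
      ae_not_upperPorousAt volume {β : ℝ | ¬ ∃ n ≥ N, IsDeepRecord N β n},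
    countable_setOf_orbitOne_eq_zero.ae_notMem volume] with β hporous h0 hβ N
  by_contra hN
  exact hporous N hN
    (upperPorousAt_setOf_not_exists_isDeepRecord hβ (fun n hn => h0 ⟨n, hn⟩) N)

end DeepRecords

section BifurcationSet

variable {β t : ℝ} {n : ℕ}

lemma mem_Ebif_iff : t ∈ Ebif β ↔
    t ∈ Ico (0 : ℝ) 1 ∧ ∀ t' > t, ∃ x ∈ Ico t t', ∀ k, t ≤ (Tbeta β)^[k] x := by
  refine and_congr_right fun ht => ⟨fun h t' ht' => ?_, fun h t' ht' heq => ?_⟩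
  · by_contra! hc
    refine h t' ht' (Subset.antisymm (fun x hx => ⟨hx.1, fun k => ht'.le.trans (hx.2 k)⟩)
      fun x hx => ⟨hx.1, fun k => ?_⟩)
    by_contra! hlt
    obtain ⟨l, hl⟩ := hc _ ⟨hx.2 k, hlt⟩
    rw [← iterate_add_apply] at hl
    exact hl.not_ge (hx.2 _)
  · obtain ⟨x, hx, hsurv⟩ := h (min t' 1) (lt_min ht' ht.2)
    have hx' : x ∈ survivor β t' :=
      heq ▸ ⟨⟨ht.1.trans hx.1, hx.2.trans_le (min_le_right _ _)⟩, hsurv⟩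
    exact (hx.2.trans_le (min_le_left _ _)).not_ge (hx'.2 0)

lemma mem_Ebif_of_le_iterate (ht : t ∈ Ico (0 : ℝ) 1) (h : ∀ k, t ≤ (Tbeta β)^[k] t) :
    t ∈ Ebif β :=
  mem_Ebif_iff.2 ⟨ht, fun _ ht' => ⟨t, left_mem_Ico.2 ht', h⟩⟩

lemma eventually_iterate_eq (ht : ∀ k, 0 < (Tbeta β)^[k] t) (k : ℕ) :
    ∀ᶠ z in 𝓝 t, (Tbeta β)^[k] z = (Tbeta β)^[k] t + β ^ k * (z - t) := by
  induction k with
  | zero => exact Eventually.of_forall fun z => by simp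
  | succ k ih =>
    have hlim : Tendsto (fun z => (Tbeta β)^[k + 1] t + β ^ (k + 1) * (z - t)) (𝓝 t)
        (𝓝 ((Tbeta β)^[k + 1] t)) :=
      Continuous.tendsto' (by fun_prop) _ _ (by simp)
    have hlt : (Tbeta β)^[k + 1] t < 1 := by
      rw [iterate_succ_apply']
      exact (Tbeta_mem_Ico β _).2
    filter_upwards [ih, hlim.eventually (Ioo_mem_nhds (ht (k + 1)) hlt)] with z hz hmem
    rw [iterate_succ_apply', hz, Tbeta, Int.fract_eq_iff]
    refine ⟨hmem.1.le, hmem.2, ⌊β * (Tbeta β)^[k] t⌋, ?_⟩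
    rw [iterate_succ_apply', Tbeta, ← Int.self_sub_floor]
    ring

lemma eventually_nhdsLT_notMem_Ebif (hβ : 1 < β) (hn : n ≠ 0) (hper : IsPeriodicPt (Tbeta β) n t)
    (ht : ∀ k, 0 < (Tbeta β)^[k] t) : ∀ᶠ y in 𝓝[<] t, y ∉ Ebif β := by
  obtain ⟨l, hl, haffine⟩ := mem_nhdsLT_iff_exists_Ioo_subset.1
    ((eventually_iterate_eq ht n).filter_mono nhdsWithin_le_nhds)
  filter_upwards [Ioo_mem_nhdsLT hl] with y hy hyE
  have hyt : 0 < t - y := sub_pos.2 hy.2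
  have hβn : 0 < β ^ n := by positivity
  obtain ⟨z, hz, hsurv⟩ := (mem_Ebif_iff.1 hyE).2 (t - (t - y) / β ^ n)
    (by linarith [div_lt_self hyt (one_lt_pow₀ hβ hn)])
  have hzt : z < t := by linarith [hz.2, div_pos hyt hβn]
  refine (hsurv n).not_gt ?_
  calc (Tbeta β)^[n] z = t + β ^ n * (z - t) := by
        rw [haffine ⟨hy.1.trans_le hz.1, hzt⟩, hper.eq]
    _ < t + β ^ n * -((t - y) / β ^ n) := by gcongr; linarith [hz.2]
    _ = y := by rw [mul_neg, mul_div_cancel₀ _ hβn.ne']; ring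

lemma eventually_nhdsGT_notMem_Ebif (h : ∀ᶠ z in 𝓝[>] t, ∃ k, (Tbeta β)^[k] z ≤ t) :
    ∀ᶠ y in 𝓝[>] t, y ∉ Ebif β := by
  obtain ⟨u, hu, hreturn⟩ := mem_nhdsGT_iff_exists_Ioo_subset.1 h
  filter_upwards [Ioo_mem_nhdsGT hu] with y hy hyE
  obtain ⟨z, hz, hsurv⟩ := (mem_Ebif_iff.1 hyE).2 u hy.2
  obtain ⟨k, hk⟩ := hreturn ⟨hy.1.trans_le hz.1, hz.2⟩
  exact (hk.trans_lt hy.1).not_ge (hsurv k)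

theorem not_accPt_Ebif (hβ : 1 < β) (hn : n ≠ 0) (hper : IsPeriodicPt (Tbeta β) n t)
    (ht : ∀ k, 0 < (Tbeta β)^[k] t) (h : ∀ᶠ z in 𝓝[>] t, ∃ k, (Tbeta β)^[k] z ≤ t) :
    ¬ AccPt t (𝓟 (Ebif β)) := by
  rw [accPt_iff_frequently_nhdsNE, not_frequently, ← nhdsLT_sup_nhdsGT, eventually_sup]
  exact ⟨eventually_nhdsLT_notMem_Ebif hβ hn hper ht, eventually_nhdsGT_notMem_Ebif h⟩

end BifurcationSet

section IsolatedPoints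

/-- The fixed point near `1` of the `n`-th iterate of the β-transformation, when `n` is a deep
record of the orbit of `1`: the solution `p` of `orbitOne β n - β ^ n * (1 - p) = p - 1`. -/
noncomputable def returnPoint (β : ℝ) (n : ℕ) : ℝ := 1 - orbitOne β n / (β ^ n - 1)

variable {β x : ℝ} {n : ℕ}

lemma iterate_eq_fract (hβ : 0 < β) (hx : x ∈ Ico (0 : ℝ) 1)
    (h : ∀ i < n, 0 ≤ orbitOne β i - β ^ i * (1 - x)) :
    (Tbeta β)^[n] x = Int.fract (orbitOne β n - β ^ n * (1 - x)) := by
  induction n with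
  | zero => simpa [orbitOne_zero] using (Int.fract_eq_self.2 hx).symm
  | succ n ih =>
    have hlt : orbitOne β n - β ^ n * (1 - x) < 1 := by
      linarith [(orbitOne_mem_Icc β n).2, mul_pos (pow_pos hβ n) (sub_pos.2 hx.2)]
    rw [iterate_succ_apply', ih fun i hi => h i (by omega),
      Int.fract_eq_self.2 ⟨h n n.lt_succ_self, hlt⟩, Tbeta, Int.fract_eq_fract]
    refine ⟨digitOne β n, ?_⟩
    rw [orbitOne_succ_eq_sub]
    ring

lemma pow_sub_one_mul_one_sub_returnPoint (hn : 2 ≤ β ^ n) :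
    (β ^ n - 1) * (1 - returnPoint β n) = orbitOne β n := by
  rw [returnPoint, sub_sub_cancel, mul_div_cancel₀ _ (by linarith)]

lemma returnPoint_lt_one (hn : 2 ≤ β ^ n) (hpos : 0 < orbitOne β n) : returnPoint β n < 1 :=
  sub_lt_self _ (div_pos hpos (by linarith))

lemma orbitOne_le_orbitOne_sub (hβ : 1 < β) (hn : 2 ≤ β ^ n) (h : IsDeepRecord 3 β n)
    (hx : x ∈ Ico (returnPoint β n) 1) {j : ℕ} (hj : j < n) :
    orbitOne β n ≤ orbitOne β j - β ^ j * (1 - x) := by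
  have hp : 0 ≤ 1 - returnPoint β n := sub_nonneg.2 (returnPoint_lt_one hn h.1).le
  have hshift : β ^ j * (1 - x) ≤ 2 * orbitOne β n := by
    calc β ^ j * (1 - x) ≤ β ^ n * (1 - returnPoint β n) := by
          gcongr
          exacts [sub_nonneg.2 hx.2.le, hβ.le, hx.1]
      _ ≤ 2 * (β ^ n - 1) * (1 - returnPoint β n) := by gcongr; linarith
      _ = 2 * orbitOne β n := by rw [mul_assoc, pow_sub_one_mul_one_sub_returnPoint hn]
  linarith [h.2 j hj]

lemma orbitOne_le_returnPoint (hβ : 1 < β) (hn : 2 ≤ β ^ n) (h : IsDeepRecord 3 β n) :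
    orbitOne β n ≤ returnPoint β n := by
  have hn0 : 0 < n := Nat.pos_of_ne_zero fun h0 => by norm_num [h0] at hn
  simpa [orbitOne_zero] using
    orbitOne_le_orbitOne_sub hβ hn h (left_mem_Ico.2 (returnPoint_lt_one hn h.1)) hn0

lemma mem_Ico_of_mem_Ico_returnPoint (hβ : 1 < β) (hn : 2 ≤ β ^ n) (h : IsDeepRecord 3 β n)
    (hx : x ∈ Ico (returnPoint β n) 1) : x ∈ Ico (0 : ℝ) 1 :=
  ⟨(h.1.le.trans (orbitOne_le_returnPoint hβ hn h)).trans hx.1, hx.2⟩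

lemma iterate_eq_orbitOne_sub (hβ : 1 < β) (hn : 2 ≤ β ^ n) (h : IsDeepRecord 3 β n)
    (hx : x ∈ Ico (returnPoint β n) 1) {j : ℕ} (hj : j < n) :
    (Tbeta β)^[j] x = orbitOne β j - β ^ j * (1 - x) := by
  have hnonneg : ∀ i < n, 0 ≤ orbitOne β i - β ^ i * (1 - x) := fun i hi =>
    h.1.le.trans (orbitOne_le_orbitOne_sub hβ hn h hx hi)
  have hlt : orbitOne β j - β ^ j * (1 - x) < 1 := by
    have hgap : 0 < β ^ j * (1 - x) := mul_pos (by positivity) (sub_pos.2 hx.2)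
    linarith [(orbitOne_mem_Icc β j).2]
  rw [iterate_eq_fract (by linarith) (mem_Ico_of_mem_Ico_returnPoint hβ hn h hx)
    fun i hi => hnonneg i (hi.trans hj), Int.fract_eq_self]
  exact ⟨hnonneg j hj, hlt⟩

lemma iterate_eq_fract_returnPoint_add (hβ : 1 < β) (hn : 2 ≤ β ^ n) (h : IsDeepRecord 3 β n)
    (hx : x ∈ Ico (returnPoint β n) 1) :
    (Tbeta β)^[n] x = Int.fract (returnPoint β n + β ^ n * (x - returnPoint β n)) := by
  rw [iterate_eq_fract (by linarith) (mem_Ico_of_mem_Ico_returnPoint hβ hn h hx)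
    fun i hi => h.1.le.trans (orbitOne_le_orbitOne_sub hβ hn h hx hi), Int.fract_eq_fract]
  refine ⟨-1, ?_⟩
  rw [← pow_sub_one_mul_one_sub_returnPoint hn]
  push_cast
  ring

lemma isPeriodicPt_returnPoint (hβ : 1 < β) (hn : 2 ≤ β ^ n) (h : IsDeepRecord 3 β n) :
    IsPeriodicPt (Tbeta β) n (returnPoint β n) := by
  have hp : returnPoint β n ∈ Ico (returnPoint β n) 1 :=
    left_mem_Ico.2 (returnPoint_lt_one hn h.1)
  rw [IsPeriodicPt, IsFixedPt, iterate_eq_fract_returnPoint_add hβ hn h hp, sub_self, mul_zero,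
    add_zero, Int.fract_eq_self]
  exact mem_Ico_of_mem_Ico_returnPoint hβ hn h hp

lemma iterate_eq_returnPoint_add (hβ : 1 < β) (hn : 2 ≤ β ^ n) (h : IsDeepRecord 3 β n)
    (hx : x ∈ Ico (returnPoint β n) 1) (hle : orbitOne β n ≤ (Tbeta β)^[n] x) :
    (Tbeta β)^[n] x = returnPoint β n + β ^ n * (x - returnPoint β n) := by
  have hβn : 0 < β ^ n := by positivity
  rw [iterate_eq_fract_returnPoint_add hβ hn h hx] at hle ⊢
  refine Int.fract_eq_self.2 ⟨?_, ?_⟩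
  · exact add_nonneg (h.1.le.trans (orbitOne_le_returnPoint hβ hn h))
      (mul_nonneg hβn.le (sub_nonneg.2 hx.1))
  · by_contra! hge
    have hlt : returnPoint β n + β ^ n * (x - returnPoint β n) - 1 < orbitOne β n := by
      rw [← pow_sub_one_mul_one_sub_returnPoint hn]
      linarith [mul_pos hβn (sub_pos.2 hx.2)]
    rw [← Int.fract_sub_one, Int.fract_eq_self.2
      ⟨sub_nonneg.2 hge, hlt.trans_le (orbitOne_mem_Icc β n).2⟩] at hle
    exact hlt.not_ge hle

lemma exists_iterate_lt_orbitOne (hβ : 1 < β) (hn : 2 ≤ β ^ n) (h : IsDeepRecord 3 β n)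
    (hx : x ∈ Ioo (returnPoint β n) 1) : ∃ k, (Tbeta β)^[k] x < orbitOne β n := by
  by_contra! hsurv
  set A : Set ℝ := {y ∈ Ioo (returnPoint β n) 1 | ∀ k, orbitOne β n ≤ (Tbeta β)^[k] y}
  have hreturn : ∀ y ∈ A,
      (Tbeta β)^[n] y = returnPoint β n + β ^ n * (y - returnPoint β n) := fun y hy =>
    iterate_eq_returnPoint_add hβ hn h (Ioo_subset_Ico_self hy.1) (hy.2 n)
  have hA : MapsTo (Tbeta β)^[n] A A := fun y hy => by
    refine ⟨⟨?_, ?_⟩, fun k => ?_⟩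
    · rw [hreturn y hy]
      linarith [mul_pos (show 0 < β ^ n by positivity) (sub_pos.2 hy.1.1)]
    · rw [iterate_eq_fract_returnPoint_add hβ hn h (Ioo_subset_Ico_self hy.1)]
      exact Int.fract_lt_one _
    · rw [← iterate_add_apply]
      exact hy.2 _
  refine (eq_empty_iff_forall_notMem.1 <| eq_empty_of_mapsTo_of_expanding (by linarith) hA
    (sep_subset _ _) fun y hy => ?_) x ⟨hx, hsurv⟩
  rw [hreturn y hy, add_sub_cancel_left]

theorem exists_mem_Ebif_not_accPt_of_isDeepRecord (hβ : 1 < β) (hn : 2 ≤ β ^ n)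
    (h : IsDeepRecord 3 β n) :
    ∃ t ∈ Ebif β, 0 < t ∧ (∀ j < n, t ≤ orbitOne β j) ∧ ¬ AccPt t (𝓟 (Ebif β)) := by
  have hn0 : n ≠ 0 := fun h0 => by norm_num [h0] at hn
  set p := returnPoint β n
  have hp : p ∈ Ico p 1 := left_mem_Ico.2 (returnPoint_lt_one hn h.1)
  have hper := isPeriodicPt_returnPoint hβ hn h
  obtain ⟨i, hi, hmin⟩ := exists_iterate_le_of_isPeriodicPt hn0 hper
  set t := (Tbeta β)^[i] p with ht
  have hst : orbitOne β n ≤ t := by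
    rw [ht, iterate_eq_orbitOne_sub hβ hn h hp hi]
    exact orbitOne_le_orbitOne_sub hβ hn h hp hi
  have hle : ∀ k, t ≤ (Tbeta β)^[k] t := fun k => by
    rw [ht, ← iterate_add_apply]
    exact hmin _
  have hpos : ∀ k, 0 < (Tbeta β)^[k] t := fun k => h.1.trans_le (hst.trans (hle k))
  have hback : (Tbeta β)^[n - i] t = p := by
    rw [ht, ← iterate_add_apply, Nat.sub_add_cancel hi.le, hper.eq]
  refine ⟨t, mem_Ebif_of_le_iterate ⟨(hpos 0).le, (hmin 0).trans_lt hp.2⟩ hle, hpos 0,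
    fun j hj => ?_, not_accPt_Ebif hβ hn0 (hper.apply_iterate i) hpos ?_⟩
  · refine (hmin j).trans ?_
    rw [iterate_eq_orbitOne_sub hβ hn h hp hj]
    exact sub_le_self _ (mul_nonneg (by positivity) (sub_nonneg.2 hp.2.le))
  · filter_upwards [(eventually_iterate_eq hpos (n - i)).filter_mono nhdsWithin_le_nhds,
      self_mem_nhdsWithin] with z hz hzt
    have hescape : (Tbeta β)^[n - i] z ∈ Ioo p 1 := by
      refine ⟨?_, ?_⟩
      · rw [hz, hback]
        linarith [mul_pos (show 0 < β ^ (n - i) by positivity) (sub_pos.2 hzt)]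
      · rw [show n - i = n - i - 1 + 1 by omega, iterate_succ_apply']
        exact (Tbeta_mem_Ico β _).2
    obtain ⟨k, hk⟩ := exists_iterate_lt_orbitOne hβ hn h hescape
    exact ⟨k + (n - i), (iterate_add_apply _ _ _ _).trans_le (hk.le.trans hst)⟩

theorem frequently_mem_Ebif_and_not_accPt (hβ : 1 < β) (h : ∀ N : ℕ, ∃ n ≥ N, IsDeepRecord N β n) :
    ∃ᶠ t in 𝓝[>] 0, t ∈ Ebif β ∧ ¬ AccPt t (𝓟 (Ebif β)) := by
  refine (nhdsGT_basis 0).frequently_iff.2 fun δ hδ => ?_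
  obtain ⟨m, hm⟩ : ∃ m, orbitOne β m < δ := by
    obtain ⟨N, hN⟩ := exists_nat_gt (1 / δ)
    obtain ⟨m, hm, hrec⟩ := h (N + 1)
    have hle : (N : ℝ) * orbitOne β m ≤ 1 := (hrec.mono (by simp)).2 0 (by omega)
    refine ⟨m, ?_⟩
    by_contra! hδm
    have hNδ := (div_lt_iff₀ hδ).1 hN
    exact (hNδ.trans_le (by gcongr)).not_ge hle
  obtain ⟨l, hl⟩ := pow_unbounded_of_one_lt 2 hβ
  obtain ⟨n, hn, hrec⟩ := h (max 3 (max l (m + 1)))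
  obtain ⟨t, htE, ht0, htle, hacc⟩ := exists_mem_Ebif_not_accPt_of_isDeepRecord hβ
    (hl.le.trans (pow_le_pow_right₀ hβ.le (by omega))) (hrec.mono (by simp))
  exact ⟨t, ⟨ht0, (htle m (by omega)).trans_lt hm⟩, htE, hacc⟩

end IsolatedPoints

section AccumulationPoints

/-- The inverse branch of the `(m + 1)`-st iterate of the β-transformation along the digits
`1, 0, …, 0`. -/
noncomputable def branch (β : ℝ) (m : ℕ) (x : ℝ) : ℝ := (1 + x / β ^ m) / β

/-- The fixed point of `branch β m`. -/
noncomputable def branchPoint (β : ℝ) (m : ℕ) : ℝ := β ^ m / (β ^ (m + 1) - 1)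

variable {β r x : ℝ} {m : ℕ}

lemma survivor_anti {t : ℝ} (hrt : r ≤ t) : survivor β t ⊆ survivor β r :=
  fun _ hx => ⟨hx.1, fun k => hrt.trans (hx.2 k)⟩

lemma subset_survivor_of_mapsTo {A : Set ℝ} (hA : A ⊆ Ico 0 1) (hr : A ⊆ Ici r)
    (hmaps : MapsTo (Tbeta β) A A) : A ⊆ survivor β r :=
  fun _ hx => ⟨hA hx, fun k => hr (hmaps.iterate k hx)⟩

lemma mem_survivor_of_Tbeta_mem (hx : x ∈ Ico (0 : ℝ) 1) (hr : r ≤ x)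
    (h : Tbeta β x ∈ survivor β r) : x ∈ survivor β r :=
  ⟨hx, fun k => k.casesOn hr h.2⟩

lemma Tbeta_div (hβ : β ≠ 0) (hx : x ∈ Ico (0 : ℝ) 1) : Tbeta β (x / β) = x := by
  rw [Tbeta, mul_div_cancel₀ _ hβ, Int.fract_eq_self]
  exact hx

lemma div_pow_mem_Ico (hβ : 1 ≤ β) (hx : x ∈ Ico (0 : ℝ) 1) (j : ℕ) : x / β ^ j ∈ Ico (0 : ℝ) 1 :=
  ⟨div_nonneg hx.1 (by positivity), (div_le_self hx.1 (one_le_pow₀ hβ)).trans_lt hx.2⟩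

lemma Tbeta_div_pow_succ (hβ : 1 ≤ β) (hx : x ∈ Ico (0 : ℝ) 1) (j : ℕ) :
    Tbeta β (x / β ^ (j + 1)) = x / β ^ j := by
  rw [pow_succ, ← div_div, Tbeta_div (by positivity) (div_pow_mem_Ico hβ hx j)]

lemma div_pow_mem_survivor (hβ : 1 ≤ β) (hx : x ∈ survivor β r) {j : ℕ} (hj : r ≤ x / β ^ j) :
    x / β ^ j ∈ survivor β r := by
  induction j with
  | zero => simpa using hx
  | succ j ih =>
    refine mem_survivor_of_Tbeta_mem (div_pow_mem_Ico hβ hx.1 _) hj ?_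
    rw [Tbeta_div_pow_succ hβ hx.1]
    refine ih (hj.trans ?_)
    gcongr
    exacts [hx.1.1, j.le_succ]

lemma div_pow_mem_Ebif (hβ : 1 ≤ β) (hx : x ∈ survivor β r) {j : ℕ} (hj : 1 / β ^ j ≤ r) :
    x / β ^ j ∈ Ebif β := by
  have hle : x / β ^ j ≤ r := by
    refine le_trans ?_ hj
    gcongr
    exact hx.1.2.le
  have hmem : x / β ^ j ∈ survivor β (x / β ^ j) :=
    div_pow_mem_survivor hβ (survivor_anti hle hx) le_rfl
  exact mem_Ebif_of_le_iterate hmem.1 hmem.2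

lemma accPt_Ebif_div_pow (hβ : 1 ≤ β) (h : AccPt x (𝓟 (survivor β r))) {j : ℕ}
    (hj : 1 / β ^ j ≤ r) : AccPt (x / β ^ j) (𝓟 (Ebif β)) := by
  have hβj : β ^ j ≠ 0 := by positivity
  refine (h.map (f := (· / β ^ j)) (by fun_prop) fun _ _ => (div_left_inj' hβj).1).mono ?_
  rw [map_principal, principal_mono]
  rintro _ ⟨y, hy, rfl⟩
  exact div_pow_mem_Ebif hβ hy hj

lemma branch_mem_Ico (hβ : 1 < β) (hm : 1 < β ^ m * (β - 1)) (hx : x ∈ Ico (0 : ℝ) 1) :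
    branch β m x ∈ Ico (1 / β) 1 := by
  have hβ0 : 0 < β := by linarith
  have hxm : x / β ^ m < β - 1 := by
    rw [div_lt_iff₀' (by positivity)]
    exact hx.2.trans hm
  refine ⟨?_, ?_⟩
  · rw [branch]
    gcongr
    exact le_add_of_nonneg_right (div_pow_mem_Ico hβ.le hx m).1
  · rw [branch, div_lt_one hβ0]
    linarith

lemma Tbeta_branch (hβ : 1 ≤ β) (hx : x ∈ Ico (0 : ℝ) 1) (m : ℕ) :
    Tbeta β (branch β m x) = x / β ^ m := by
  rw [Tbeta, branch, mul_div_cancel₀ _ (by positivity), Int.fract_one_add, Int.fract_eq_self]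
  exact div_pow_mem_Ico hβ hx m

lemma branchPoint_mem_Ico (hβ : 1 ≤ β) (hm : 1 < β ^ m * (β - 1)) :
    branchPoint β m ∈ Ico (0 : ℝ) 1 := by
  have hlt : β ^ m < β ^ (m + 1) - 1 := by
    rw [pow_succ]
    linarith
  have hpos : 0 < β ^ m := by positivity
  exact ⟨(div_pos hpos (hpos.trans hlt)).le, (div_lt_one (hpos.trans hlt)).2 hlt⟩

lemma branch_branchPoint (hβ : 1 < β) (m : ℕ) : branch β m (branchPoint β m) = branchPoint β m := by
  have hne : β ^ (m + 1) - 1 ≠ 0 := (sub_pos.2 (one_lt_pow₀ hβ m.succ_ne_zero)).ne'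
  have hβ0 : β ≠ 0 := by positivity
  rw [branch, branchPoint]
  field_simp
  ring

lemma branch_sub_branchPoint (hβ : 1 < β) (m : ℕ) (x : ℝ) :
    branch β m x - branchPoint β m = 1 / β ^ (m + 1) * (x - branchPoint β m) := by
  have hβ0 : β ≠ 0 := by positivity
  nth_rw 1 [← branch_branchPoint hβ m]
  rw [branch, branch]
  field_simp
  ring

lemma one_div_le_branchPoint (hβ : 1 < β) (hm : 1 < β ^ m * (β - 1)) :
    1 / β ≤ branchPoint β m := by
  rw [← branch_branchPoint hβ]
  exact (branch_mem_Ico hβ hm (branchPoint_mem_Ico hβ.le hm)).1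

lemma branchPoint_mem_survivor (hβ : 1 < β) (hm : 1 < β ^ m * (β - 1))
    (hr : r ≤ 1 / β ^ (m + 1)) : branchPoint β m ∈ survivor β r := by
  have hv := branchPoint_mem_Ico hβ.le hm
  have hvβ := one_div_le_branchPoint hβ hm
  refine subset_survivor_of_mapsTo (A := (branchPoint β m / β ^ ·) '' Iic m) ?_ ?_ ?_
    ⟨0, by simp⟩
  · rintro _ ⟨j, -, rfl⟩
    exact div_pow_mem_Ico hβ.le hv j
  · rintro _ ⟨j, hj, rfl⟩
    calc r ≤ 1 / β ^ (m + 1) := hr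
      _ = 1 / β / β ^ m := by rw [pow_succ', div_div]
      _ ≤ branchPoint β m / β ^ j := by
        gcongr
        exacts [hv.1, hβ.le, hj]
  · rintro _ ⟨j, hj, rfl⟩
    cases j with
    | zero =>
      refine ⟨m, self_mem_Iic, ?_⟩
      simp only [pow_zero, div_one]
      nth_rw 2 [← branch_branchPoint hβ]
      rw [Tbeta_branch hβ.le hv]
    | succ j =>
      exact ⟨j, (Nat.lt_of_succ_le hj).le, (Tbeta_div_pow_succ hβ.le hv j).symm⟩

lemma mapsTo_branch (hβ : 1 < β) (hm : 1 < β ^ m * (β - 1)) :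
    MapsTo (branch β m) {x ∈ survivor β (1 / β ^ (m + 2)) | 1 / β ^ 2 ≤ x}
      {x ∈ survivor β (1 / β ^ (m + 2)) | 1 / β ^ 2 ≤ x} := by
  rintro x ⟨hx, hxβ⟩
  have hmem := branch_mem_Ico hβ hm hx.1
  have hle : ∀ j ≥ 1, 1 / β ^ j ≤ branch β m x := fun j hj =>
    (one_div_le_one_div_of_le (by positivity) (le_self_pow₀ hβ.le (by omega))).trans hmem.1
  refine ⟨mem_survivor_of_Tbeta_mem ⟨(by positivity : 0 ≤ 1 / β).trans hmem.1, hmem.2⟩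
    (hle _ (by omega)) ?_, hle 2 (by omega)⟩
  rw [Tbeta_branch hβ.le hx.1]
  refine div_pow_mem_survivor hβ.le hx ?_
  rw [add_comm, pow_add, ← div_div]
  gcongr

theorem accPt_branchPoint (hβ : 1 < β) (hm : 1 < β ^ m * (β - 1)) :
    AccPt (branchPoint β m) (𝓟 (survivor β (1 / β ^ (m + 2)))) := by
  have hvβ := one_div_le_branchPoint hβ hm
  have hvβ2 : 1 / β ^ 2 ≤ branchPoint β m / β ^ 1 := by
    rw [pow_one, sq, ← div_div]
    gcongr
  have hc : ‖1 / β ^ (m + 1)‖ < 1 := by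
    rw [Real.norm_of_nonneg (by positivity), div_lt_one (by positivity)]
    exact one_lt_pow₀ hβ m.succ_ne_zero
  refine (accPt_of_mapsTo_of_contracting (u := branchPoint β m / β ^ 1) (by positivity) hc
    (mapsTo_branch hβ hm) (fun x _ => branch_sub_branchPoint hβ m x) ⟨?_, hvβ2⟩ ?_).mono ?_
  · exact div_pow_mem_survivor hβ.le
      (branchPoint_mem_survivor hβ hm (one_div_pow_le_one_div_pow_of_le hβ.le (by omega)))
      ((one_div_pow_le_one_div_pow_of_le hβ.le (by omega)).trans hvβ2)
  · rw [pow_one]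
    exact (div_lt_self ((by positivity : 0 < 1 / β).trans_le hvβ) hβ).ne
  · exact principal_mono.2 (sep_subset _ _)

theorem frequently_mem_Ebif_and_accPt (hβ : 1 < β) :
    ∃ᶠ t in 𝓝[>] 0, t ∈ Ebif β ∧ AccPt t (𝓟 (Ebif β)) := by
  obtain ⟨m, hm⟩ := pow_unbounded_of_one_lt (1 / (β - 1)) hβ
  rw [div_lt_iff₀ (sub_pos.2 hβ)] at hm
  have hsurv : branchPoint β m ∈ survivor β (1 / β ^ (m + 2)) :=
    branchPoint_mem_survivor hβ hm (one_div_pow_le_one_div_pow_of_le hβ.le (by omega))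
  have hpos : 0 < branchPoint β m :=
    (by positivity : 0 < 1 / β).trans_le (one_div_le_branchPoint hβ hm)
  have hpow := tendsto_pow_atTop_atTop_of_one_lt hβ
  have hlim : Tendsto (fun N => branchPoint β m / β ^ N) atTop (𝓝[>] 0) :=
    tendsto_nhdsWithin_iff.2 ⟨hpow.const_div_atTop _, Eventually.of_forall fun N => by
      rw [mem_Ioi]
      positivity⟩
  refine hlim.frequently (Eventually.frequently ?_)
  filter_upwards [(hpow.const_div_atTop 1).eventually_le_const
    (show 0 < 1 / β ^ (m + 2) by positivity)] with N hN
  exact ⟨div_pow_mem_Ebif hβ.le hsurv hN, accPt_Ebif_div_pow hβ.le (accPt_branchPoint hβ hm) hN⟩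

end AccumulationPoints

/-- For Lebesgue-almost every `β ∈ (1,∞)`, for every `δ > 0` the set
`E_β ∩ (0,δ)` contains infinitely many isolated points of `E_β` and infinitely many
accumulation points of `E_β`. -/
theorem ae_isolated_and_accumulation :
    ∀ᵐ β : ℝ ∂MeasureTheory.volume, 1 < β →
      ∀ δ : ℝ, 0 < δ →
        {t | t ∈ Ebif β ∩ Set.Ioo 0 δ ∧ ¬ AccPt t (𝓟 (Ebif β))}.Infinite ∧
        {t | t ∈ Ebif β ∩ Set.Ioo 0 δ ∧ AccPt t (𝓟 (Ebif β))}.Infinite := by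
  filter_upwards [ae_forall_exists_isDeepRecord] with β hrec hβ δ hδ
  have hIoo : ∀ᶠ t in 𝓝[>] (0 : ℝ), t ∈ Ioo 0 δ := Ioo_mem_nhdsGT hδ
  constructor
  · exact infinite_setOf_of_frequently_nhdsGT <|
      ((frequently_mem_Ebif_and_not_accPt hβ (hrec hβ)).and_eventually hIoo).mono
        fun t ⟨⟨htE, hacc⟩, ht⟩ => ⟨⟨htE, ht⟩, hacc⟩
  · exact infinite_setOf_of_frequently_nhdsGT <|
      ((frequently_mem_Ebif_and_accPt hβ).and_eventually hIoo).mono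
        fun t ⟨⟨htE, hacc⟩, ht⟩ => ⟨⟨htE, ht⟩, hacc⟩
end
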